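/- arXiv:2002.08824 — 3 statements merged into one kernel-verified Lean document; each statement's English description precedes it below -/
import Mathlib

section
/- Let M be a matroid of rank n−k on a ground set E of cardinality n, and let S = (σ_1 ⊊ ⋯ ⊊ σ_k) ∈ Σ be a chain with e(S) = (e_1,…,e_k), the bottom-up greedy weights of M. Let ∅ ⊊ ρ_1 ⊊ ρ_2 ⊊ ⋯ ⊊ ρ_n = E be any maximal chain of subsets of E (so |ρ_i| = i) that contains E∖σ_i for every 1 ≤ i ≤ k, and let τ_1 ⊊ ⋯ ⊊ τ_{n−k} be the chain obtained from (ρ_1,…,ρ_n) by removing all sets of cardinality n+1−|σ_i| for 1 ≤ i ≤ k. Then n̄(τ_j) = j for every 1 ≤ j ≤ n−k, where n̄ is the nullity function of the dual matroid M̄. -/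
open Finset

/-- A matroid on ground set `Fin n`, given by its rank function. -/
structure MatroidRk (n : ℕ) where
  r : Finset (Fin n) → ℕ
  r_le_card : ∀ X, r X ≤ X.card
  r_mono : ∀ ⦃X Y : Finset (Fin n)⦄, X ⊆ Y → r X ≤ r Y
  r_submod : ∀ X Y, r (X ∩ Y) + r (X ∪ Y) ≤ r X + r Y

namespace MatroidRk

variable {n : ℕ}

/-- The nullity function `n(X) = |X| - r(X)`. -/
def nul (M : MatroidRk n) (X : Finset (Fin n)) : ℕ := X.card - M.r X

/-- `X ∈ N_i`: `X` is inclusion-minimal among the subsets of nullity `i`. -/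
def Nmin (M : MatroidRk n) (i : ℕ) (X : Finset (Fin n)) : Prop :=
  M.nul X = i ∧ ∀ Y ⊆ X, M.nul Y = i → Y = X

/-- Membership in `Σ`: a chain `σ₁ ⊊ ⋯ ⊊ σ_k` with `σ_i ∈ 𝒩_i`. -/
def SigmaChain (M : MatroidRk n) (k : ℕ) (σ : Fin k → Finset (Fin n)) : Prop :=
  StrictMono σ ∧ ∀ i : Fin k, M.nul (σ i) = (i : ℕ) + 1

/-- Membership in `Σ'`: a chain `σ₁ ⊊ ⋯ ⊊ σ_k` with `σ_i ∈ N_i`. -/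
def SigmaChain' (M : MatroidRk n) (k : ℕ) (σ : Fin k → Finset (Fin n)) : Prop :=
  StrictMono σ ∧ ∀ i : Fin k, M.Nmin ((i : ℕ) + 1) (σ i)

/-- The set `{e(S) : S ∈ Σ}` of tuples of cardinalities of chains in `Σ`. -/
def eSet (M : MatroidRk n) (k : ℕ) : Set (Fin k → ℕ) :=
  {u | ∃ σ : Fin k → Finset (Fin n), M.SigmaChain k σ ∧ ∀ i, (σ i).card = u i}

/-- The set `{e(S) : S ∈ Σ'}`. -/
def eSet' (M : MatroidRk n) (k : ℕ) : Set (Fin k → ℕ) :=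
  {u | ∃ σ : Fin k → Finset (Fin n), M.SigmaChain' k σ ∧ ∀ i, (σ i).card = u i}

/-- The generalized Hamming weight `d_i = min {|σ| : σ ∈ 𝒩_i}`. -/
noncomputable def dW (M : MatroidRk n) (i : ℕ) : ℕ :=
  sInf {c | ∃ X, M.nul X = i ∧ X.card = c}

end MatroidRk

/-- `w` is the lexicographically smallest element of `A`. -/
def IsLexMin {k : ℕ} (A : Set (Fin k → ℕ)) (w : Fin k → ℕ) : Prop :=
  w ∈ A ∧ ∀ u ∈ A, toLex w ≤ toLex u

/-- `w` is the reverse-lexicographically smallest element of `A`. -/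
def IsRevLexMin {k : ℕ} (A : Set (Fin k → ℕ)) (w : Fin k → ℕ) : Prop :=
  w ∈ A ∧ ∀ u ∈ A, toLex (w ∘ Fin.rev) ≤ toLex (u ∘ Fin.rev)

namespace MatroidRk

/-- The rank function of the dual matroid: `r̄(X) = |X| + r(E∖X) - r(E)`. -/
def rDual {n : ℕ} (M : MatroidRk n) (X : Finset (Fin n)) : ℕ :=
  X.card + M.r Xᶜ - M.r Finset.univ

/-- The nullity function of the dual matroid: `n̄(X) = |X| - r̄(X)`. -/
def nulDual {n : ℕ} (M : MatroidRk n) (X : Finset (Fin n)) : ℕ :=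
  X.card - M.rDual X

end MatroidRk


theorem MatroidRk.r_le_add_sdiff {n : ℕ} (M : MatroidRk n) {X Y : Finset (Fin n)} (h : X ⊆ Y) :
    M.r Y + X.card ≤ M.r X + Y.card := by
  have h1 := M.r_submod X (Y \ X)
  rw [Finset.union_sdiff_of_subset h] at h1
  have h2 := M.r_le_card (Y \ X)
  have h3 := Finset.card_sdiff_add_card_eq_card h
  omega

theorem MatroidRk.nul_mono {n : ℕ} (M : MatroidRk n) {X Y : Finset (Fin n)} (h : X ⊆ Y) :
    M.nul X ≤ M.nul Y := by
  have h1 := M.r_le_add_sdiff h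
  have h2 := M.r_le_card X
  have h3 := M.r_le_card Y
  unfold MatroidRk.nul
  omega

open MatroidRk in
/-- Lemma on `δ(S)`: if `S = (σ_1 ⊊ ⋯ ⊊ σ_k) ∈ Σ` computes the bottom-up greedy
weights, `∅ = ρ_0 ⊊ ρ_1 ⊊ ⋯ ⊊ ρ_n = E` is a maximal chain (so `|ρ_j| = j`) containing all
complements `E ∖ σ_i`, and `τ_1 ⊊ ⋯ ⊊ τ_{n-k}` is obtained from it by removing all the sets of
cardinality `n + 1 - |σ_i|`, then `n̄(τ_j) = j` for all `1 ≤ j ≤ n - k`. -/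
theorem statement4 {n k : ℕ} (M : MatroidRk n) (hrk : M.r Finset.univ + k = n)
    (σ : Fin k → Finset (Fin n)) (hσ : M.SigmaChain k σ)
    (hmin : IsLexMin (M.eSet k) (fun i => (σ i).card))
    (ρ : Fin (n + 1) → Finset (Fin n)) (hρmono : StrictMono ρ)
    (hρ0 : ρ 0 = ∅) (hρlast : ρ (Fin.last n) = Finset.univ)
    (hρcard : ∀ j : Fin (n + 1), (ρ j).card = (j : ℕ))
    (hcompl : ∀ i : Fin k, ∃ j : Fin (n + 1), ρ j = (σ i)ᶜ)
    (τ : Fin (n - k) → Finset (Fin n)) (ι : Fin (n - k) → Fin (n + 1))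
    (hιmono : StrictMono ι) (hι1 : ∀ j, 1 ≤ (ι j : ℕ))
    (hτ : ∀ j, τ j = ρ (ι j))
    (hrange : ∀ m : Fin (n + 1), 1 ≤ (m : ℕ) →
      ((∃ j, ι j = m) ↔ ∀ i : Fin k, (m : ℕ) ≠ n + 1 - (σ i).card)) :
    ∀ j : Fin (n - k), M.nulDual (τ j) = (j : ℕ) + 1 := by
  classical
  -- removed steps
  have key : ∀ (i : Fin k) (m : Fin n), ((m.succ : Fin (n+1)) : ℕ) = n + 1 - (σ i).card →
      M.r (ρ m.castSucc)ᶜ = M.r (ρ m.succ)ᶜ := by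
    intro i m hm
    obtain ⟨a, ha⟩ := hcompl i
    have hσn : (σ i).card ≤ n := by simpa using Finset.card_le_univ (σ i)
    have hac := hρcard a
    rw [ha, Finset.card_compl, Fintype.card_fin] at hac
    have ham : a = m.castSucc := by
      apply Fin.ext
      simp at hm ⊢
      omega
    have hC : (ρ m.castSucc)ᶜ = σ i := by rw [← ham, ha, compl_compl]
    set Y := (ρ m.succ)ᶜ with hY
    have hYs : Y ⊂ σ i := by
      rw [← hC]
      exact Finset.compl_ssubset_compl.2 (hρmono (Fin.castSucc_lt_succ))
    have hYc : Y.card + 1 = (σ i).card := by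
      rw [hY, Finset.card_compl, Fintype.card_fin, hρcard]
      simp at hm ⊢
      omega
    rw [hC]
    by_contra hne
    have h1 := M.r_mono hYs.1
    have h2 := M.r_le_add_sdiff hYs.1
    have hnul : M.nul Y = (i : ℕ) + 1 := by
      rw [← hσ.2 i]
      unfold MatroidRk.nul
      omega
    have hlow : ∀ j, j < i → σ j < Y := by
      intro j hj
      have hjn := hσ.2 j
      have hji : (j : ℕ) < i := hj
      obtain ⟨b, hb⟩ := hcompl j
      have hb' : σ j = (ρ b)ᶜ := by rw [hb, compl_compl]
      have hnot : ¬ Y ⊆ σ j := fun h => by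
        have := M.nul_mono h
        omega
      refine Finset.ssubset_iff_subset_ne.2 ⟨?_, fun h => hnot h.symm.subset⟩
      rcases le_total m.succ b with h | h
      · rw [hb', hY]
        exact Finset.compl_subset_compl.2 (hρmono.monotone h)
      · exact absurd (by rw [hb', hY]; exact Finset.compl_subset_compl.2 (hρmono.monotone h)) hnot
    have hchain : M.SigmaChain k (Function.update σ i Y) := by
      constructor
      · intro p q hpq
        by_cases hp : p = i
        · subst hp
          rw [Function.update_self, Function.update_of_ne hpq.ne']
          exact lt_trans hYs (hσ.1 hpq)
        · rw [Function.update_of_ne hp]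
          by_cases hq : q = i
          · subst hq
            rw [Function.update_self]
            exact hlow p hpq
          · rw [Function.update_of_ne hq]
            exact hσ.1 hpq
      · intro p
        by_cases hp : p = i
        · subst hp
          rw [Function.update_self, hnul]
        · rw [Function.update_of_ne hp]
          exact hσ.2 p
    have hle := hmin.2 _ ⟨_, hchain, fun _ => rfl⟩
    refine absurd hle (not_le_of_gt ?_)
    refine ⟨i, fun j hj => ?_, ?_⟩
    · simp [Function.update_of_ne hj.ne]
    · simp
      omega
  have step : ∀ m : Fin n, M.r (ρ m.castSucc)ᶜ ≤ M.r (ρ m.succ)ᶜ + 1 := by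
    intro m
    have h := M.r_le_add_sdiff (Finset.compl_subset_compl.2
      (hρmono.monotone (Fin.castSucc_lt_succ (i := m)).le))
    rw [Finset.card_compl, Finset.card_compl, hρcard, hρcard] at h
    simp at h
    omega
  set g : Fin (n + 1) → ℕ := fun m => (Finset.univ.filter (fun j => ι j ≤ m)).card with hg
  have hmono : Monotone (fun m : Fin (n + 1) => M.r (ρ m)ᶜ + g m) := by
    rw [Fin.monotone_iff_le_succ]
    intro m
    have hsub : (Finset.univ.filter (fun j => ι j ≤ m.castSucc)) ⊆
        (Finset.univ.filter (fun j => ι j ≤ m.succ)) := by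
      intro j hj
      simp only [Finset.mem_filter, Finset.mem_univ, true_and] at hj ⊢
      exact hj.trans (Fin.castSucc_lt_succ).le
    by_cases hr : ∀ i : Fin k, ((m.succ : Fin (n + 1)) : ℕ) ≠ n + 1 - (σ i).card
    · obtain ⟨j, hj⟩ := (hrange m.succ (by simp)).2 hr
      have hlt : g m.castSucc < g m.succ := by
        apply Finset.card_lt_card
        refine Finset.ssubset_iff_subset_ne.2 ⟨hsub, fun h => ?_⟩
        have : j ∈ (Finset.univ.filter (fun j => ι j ≤ m.castSucc)) := by
          rw [h]
          simp [hj]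
        simp only [Finset.mem_filter, Finset.mem_univ, true_and, hj] at this
        exact absurd this (not_le_of_gt (Fin.castSucc_lt_succ))
      have := step m
      show M.r (ρ m.castSucc)ᶜ + g m.castSucc ≤ M.r (ρ m.succ)ᶜ + g m.succ
      omega
    · push Not at hr
      obtain ⟨i, hi⟩ := hr
      have h1 := key i m hi
      have h2 : g m.castSucc ≤ g m.succ := Finset.card_le_card hsub
      show M.r (ρ m.castSucc)ᶜ + g m.castSucc ≤ M.r (ρ m.succ)ᶜ + g m.succ
      omega
  intro j
  have hlo := hmono (Fin.zero_le (ι j))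
  have hhi := hmono (Fin.le_last (ι j))
  have hgl : g (Fin.last n) = n - k := by simp [hg, Fin.le_last]
  have hgj : g (ι j) = (j : ℕ) + 1 := by
    have : (Finset.univ.filter (fun j' => ι j' ≤ ι j)) = Finset.Iic j := by
      ext j'
      simp [hιmono.le_iff_le]
    show (Finset.univ.filter (fun j' => ι j' ≤ ι j)).card = _
    rw [this, Fin.card_Iic]
  have he := M.r_le_card ∅
  simp only [hρ0, hρlast, Finset.compl_empty, Finset.compl_univ, hgl, hgj] at hlo hhi
  rw [Finset.card_empty] at he
  have hsd := M.r_le_add_sdiff (Finset.subset_univ (ρ (ι j))ᶜ)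
  rw [Finset.card_compl, Finset.card_univ, Fintype.card_fin, hρcard] at hsd
  have := (ι j).is_lt
  rw [hτ]
  unfold MatroidRk.nulDual MatroidRk.rDual
  rw [hρcard]
  omega
end

section
/- Let C be an [n,k] linear code over F_q, 1 ≤ i ≤ k, and let D ⊆ C be a top-down greedy i-subcode. Then n(Supp(D)) = i, i.e. Supp(D) ∈ 𝒩_i for the matroid M_C. -/
open Finset
open scoped Classical

noncomputable section

/-- The rank in the matroid `M_C`: `r(X)` is the rank of the column submatrix `H_X`. -/
def colRank {F : Type*} [Field F] {m n : ℕ} (H : Matrix (Fin m) (Fin n) F)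
    (X : Finset (Fin n)) : ℕ :=
  Module.finrank F (Submodule.span F ((fun j i => H i j) '' (X : Set (Fin n))))

/-- The nullity function of the matroid `M_C`: `n(X) = |X| - r(X)`. -/
def nulC {F : Type*} [Field F] {m n : ℕ} (H : Matrix (Fin m) (Fin n) F)
    (X : Finset (Fin n)) : ℕ :=
  X.card - colRank H X

/-- The support of a word. -/
def supp {F : Type*} [Field F] {n : ℕ} (c : Fin n → F) : Finset (Fin n) :=
  Finset.univ.filter (fun i => c i ≠ 0)

/-- The support of a subcode. -/
def suppD {F : Type*} [Field F] {n : ℕ} (D : Submodule F (Fin n → F)) : Finset (Fin n) :=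
  Finset.univ.filter (fun i => ∃ c ∈ D, c i ≠ 0)

/-- The weight of a subcode: the cardinality of its support. -/
def wt {F : Type*} [Field F] {n : ℕ} (D : Submodule F (Fin n → F)) : ℕ := (suppD D).card

/-- The subcode `C(X) = {c ∈ C : Supp(c) ⊆ X}`. -/
def codeRestrict {F : Type*} [Field F] {n : ℕ} (C : Submodule F (Fin n → F))
    (X : Finset (Fin n)) : Submodule F (Fin n → F) where
  carrier := {c | c ∈ C ∧ ∀ i ∉ X, c i = 0}
  add_mem' := by
    rintro a b ⟨ha, ha0⟩ ⟨hb, hb0⟩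
    exact ⟨C.add_mem ha hb, fun i hi => by simp [Pi.add_apply, ha0 i hi, hb0 i hi]⟩
  zero_mem' := ⟨C.zero_mem, fun i _ => rfl⟩
  smul_mem' := by
    rintro r a ⟨ha, ha0⟩
    exact ⟨C.smul_mem r ha, fun i hi => by simp [Pi.smul_apply, ha0 i hi]⟩

/-- The code defined by the parity check matrix `H`: `C = {x : H x = 0}`. -/
def codeOf {F : Type*} [Field F] {m n : ℕ} (H : Matrix (Fin m) (Fin n) F) :
    Submodule F (Fin n → F) :=
  LinearMap.ker H.mulVecLin

/-- The `r`-th generalized Hamming weight of a code `C`. -/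
def dC {F : Type*} [Field F] {n : ℕ} (C : Submodule F (Fin n → F)) (r : ℕ) : ℕ :=
  sInf {w | ∃ D : Submodule F (Fin n → F), D ≤ C ∧ Module.finrank F D = r ∧ wt D = w}

/-- `D` computes `d_r(C)`: `D ⊆ C`, `dim D = r` and `wt(D) = d_r(C)`. -/
def Computes {F : Type*} [Field F] {n : ℕ} (C : Submodule F (Fin n → F)) (r : ℕ)
    (D : Submodule F (Fin n → F)) : Prop :=
  D ≤ C ∧ Module.finrank F D = r ∧ wt D = dC C r

end
noncomputable section

/-- `TDG C k j` is the set of top-down greedy `(k-j)`-subcodes of an `[n,k]` code `C`: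
`TDG C k 0 = {C}`, and a top-down greedy `r`-subcode (`r = k-(j+1)`) is an `r`-dimensional
subcode contained in some top-down greedy `(r+1)`-subcode, of minimal weight among all such. -/
def TDG {F : Type*} [Field F] {n : ℕ} (C : Submodule F (Fin n → F)) (k : ℕ) :
    ℕ → Set (Submodule F (Fin n → F))
  | 0 => {C}
  | (j+1) => {D | (∃ D' ∈ TDG C k j, D ≤ D') ∧ Module.finrank F D = k - (j+1) ∧
      ∀ D₂ : Submodule F (Fin n → F), (∃ D₂' ∈ TDG C k j, D₂ ≤ D₂') →
        Module.finrank F D₂ = k - (j+1) → wt D ≤ wt D₂}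

theorem aux_nul {F : Type*} [Field F] {m n : ℕ} (H : Matrix (Fin m) (Fin n) F)
    (X : Finset (Fin n)) :
    nulC H X = Module.finrank F (codeRestrict (codeOf H) X) := by
  let L : (X → F) →ₗ[F] (Fin n → F) :=
    { toFun := fun c j => if h : j ∈ X then c ⟨j, h⟩ else 0
      map_add' := by
        intro a b; ext j; by_cases h : j ∈ X <;> simp [h]
      map_smul' := by
        intro a b; ext j; by_cases h : j ∈ X <;> simp [h] }
  have hLin : Function.Injective L := by
    intro a b hab
    ext j
    have := congrFun hab j.1
    simpa [L, j.2] using this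
  let f : (X → F) →ₗ[F] (Fin m → F) := Fintype.linearCombination F (fun j : X => fun i => H i j.1)
  have hf : f = H.mulVecLin ∘ₗ L := by
    apply LinearMap.ext
    intro c
    ext i
    simp only [f, L, Fintype.linearCombination_apply, LinearMap.comp_apply, LinearMap.coe_mk,
      AddHom.coe_mk, Matrix.mulVecLin_apply, Matrix.mulVec, dotProduct, Finset.sum_apply,
      Pi.smul_apply, smul_eq_mul]
    rw [← Finset.sum_subset (Finset.subset_univ X) (by intro x _ hx; simp [hx]),
      ← Finset.sum_coe_sort X]
    refine Finset.sum_congr rfl fun j _ => ?_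
    simp [mul_comm]
  have hr : Module.finrank F (LinearMap.range f) = colRank H X := by
    unfold colRank
    rw [Fintype.range_linearCombination]
    have hset : Set.range (fun j : X => fun i => H i j.1)
        = (fun j i => H i j) '' (X : Set (Fin n)) := by
      ext v
      simp
    rw [hset]
  have hk : codeRestrict (codeOf H) X = (LinearMap.ker f).map L := by
    ext c
    rw [Submodule.mem_map]
    constructor
    · rintro ⟨h1, h2⟩
      have hc : L (fun j => c j.1) = c := by
        ext j
        by_cases h : j ∈ X
        · simp [L, h]
        · simp [L, h, h2 j h]
      refine ⟨fun j => c j.1, ?_, hc⟩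
      rw [LinearMap.mem_ker, hf, LinearMap.comp_apply, hc]
      exact h1
    · rintro ⟨a, ha, rfl⟩
      rw [LinearMap.mem_ker, hf] at ha
      refine ⟨ha, fun j hj => by simp [L, hj]⟩
  have hrn := LinearMap.finrank_range_add_finrank_ker f
  rw [hr, Module.finrank_fintype_fun_eq_card, Fintype.card_coe] at hrn
  rw [hk, ← (Submodule.equivMapOfInjective L hLin _).finrank_eq]
  unfold nulC
  omega

theorem aux_le {F : Type*} [Field F] {n : ℕ} {C D : Submodule F (Fin n → F)} (h : D ≤ C) :
    D ≤ codeRestrict C (suppD D) := by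
  intro c hc
  refine ⟨h hc, fun i hi => ?_⟩
  by_contra hne
  exact hi (by simp only [suppD, Finset.mem_filter, Finset.mem_univ, true_and]; exact ⟨c, hc, hne⟩)

theorem aux_supp_mono {F : Type*} [Field F] {n : ℕ} {C D : Submodule F (Fin n → F)} (h : D ≤ C) :
    suppD D ⊆ suppD C := by
  intro i
  simp only [suppD, Finset.mem_filter, Finset.mem_univ, true_and]
  rintro ⟨c, hc, hne⟩
  exact ⟨c, h hc, hne⟩

/-- A nonzero code has a subcode of codimension one with smaller weight. -/
theorem aux_drop {F : Type*} [Field F] {n : ℕ} (D : Submodule F (Fin n → F))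
    (h : 0 < Module.finrank F D) :
    ∃ D₂ ≤ D, Module.finrank F D₂ + 1 = Module.finrank F D ∧ wt D₂ < wt D := by
  have hne : D ≠ ⊥ := by rintro rfl; simp at h
  obtain ⟨c, hc, hc0⟩ := Submodule.exists_mem_ne_zero_of_ne_bot hne
  obtain ⟨p, hp⟩ := Function.ne_iff.mp hc0
  let g : D →ₗ[F] F := (LinearMap.proj p).comp D.subtype
  have hg : Function.Surjective g := by
    apply LinearMap.surjective
    intro h0
    exact hp (by simpa [g] using LinearMap.congr_fun h0 ⟨c, hc⟩)
  refine ⟨(LinearMap.ker g).map D.subtype, Submodule.map_subtype_le _ _, ?_, ?_⟩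
  · rw [Submodule.finrank_map_subtype_eq]
    have h1 := LinearMap.finrank_range_add_finrank_ker g
    rw [LinearMap.range_eq_top.mpr hg, finrank_top, Module.finrank_self] at h1
    omega
  · apply Finset.card_lt_card
    rw [Finset.ssubset_iff_of_subset (aux_supp_mono (Submodule.map_subtype_le _ _))]
    refine ⟨p, ?_, ?_⟩
    · simp only [suppD, Finset.mem_filter, Finset.mem_univ, true_and]
      exact ⟨c, hc, hp⟩
    · simp only [suppD, Finset.mem_filter, Finset.mem_univ, true_and]
      rintro ⟨d, hd, hne⟩
      obtain ⟨e, he, rfl⟩ := Submodule.mem_map.mp hd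
      exact hne he

theorem aux_main {F : Type*} [Field F] {n k : ℕ} (C : Submodule F (Fin n → F))
    (hC : Module.finrank F C = k) (j : ℕ) : j ≤ k → ∀ D ∈ TDG C k j,
      D ≤ C ∧ Module.finrank F D = k - j ∧ codeRestrict C (suppD D) = D := by
  induction j with
  | zero =>
    intro _ D hD
    obtain rfl : D = C := hD
    exact ⟨le_rfl, by simpa using hC, le_antisymm (fun c hc => hc.1) (aux_le le_rfl)⟩
  | succ j ih =>
    rintro hj D ⟨⟨D', hD', hle⟩, hdim, hmin⟩
    obtain ⟨hD'C, hdim', hres⟩ := ih (by omega) D' hD'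
    have hDC := hle.trans hD'C
    refine ⟨hDC, hdim, ?_⟩
    have hA : codeRestrict C (suppD D) ≤ D' := by
      rw [← hres]
      exact fun c hc => ⟨hc.1, fun i hi => hc.2 i fun h => hi (aux_supp_mono hle h)⟩
    by_contra hne
    have hlt : D < codeRestrict C (suppD D) := lt_of_le_of_ne (aux_le hDC) (Ne.symm hne)
    have h1 := Submodule.finrank_lt_finrank_of_lt hlt
    have hEq : codeRestrict C (suppD D) = D' :=
      Submodule.eq_of_le_of_finrank_le hA (by omega)
    have hsub : suppD D' ⊆ suppD D := by
      intro p hp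
      simp only [suppD, Finset.mem_filter, Finset.mem_univ, true_and] at hp
      obtain ⟨c, hc, hcp⟩ := hp
      rw [← hEq] at hc
      by_contra hn
      exact hcp (hc.2 p hn)
    obtain ⟨D₂, h2le, h2dim, h2wt⟩ := aux_drop D' (by omega)
    have h3 := hmin D₂ ⟨D', hD', h2le⟩ (by omega)
    have h4 : wt D' ≤ wt D := Finset.card_le_card hsub
    omega

/-- if `D` is a top-down greedy `i`-subcode of an `[n,k]` code `C` (`1 ≤ i ≤ k`),
then `n(Supp(D)) = i`, i.e. `Supp(D) ∈ 𝒩_i` for the matroid `M_C`. -/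
theorem statement9 {F : Type*} [Field F] [Fintype F] {m k n : ℕ} (hmk : m + k = n)
    (H : Matrix (Fin m) (Fin n) F) (hH : H.rank = m)
    (i : ℕ) (hi1 : 1 ≤ i) (hik : i ≤ k)
    (D : Submodule F (Fin n → F)) (hD : D ∈ TDG (codeOf H) k (k - i)) :
    nulC H (suppD D) = i := by
  have hC : Module.finrank F (codeOf H) = k := by
    have h1 := LinearMap.finrank_range_add_finrank_ker H.mulVecLin
    rw [Module.finrank_fin_fun] at h1
    have h2 : Module.finrank F (LinearMap.range H.mulVecLin) = m := hH
    unfold codeOf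
    omega
  obtain ⟨_, h2, h3⟩ := aux_main (codeOf H) hC (k - i) (by omega) D hD
  rw [aux_nul, h3, h2]
  omega

end
end

section
/- A matroid M is chained if and only if its dual matroid M̄ is chained. -/
open Finset

namespace MatroidRk

/-- A matroid (of rank `n-k`) is chained if there is a chain `σ_1 ⊆ ⋯ ⊆ σ_k` with
`σ_i ∈ N_i` and `|σ_i| = d_i` for every `i`. -/
def Chained {n : ℕ} (M : MatroidRk n) (k : ℕ) : Prop :=
  ∃ σ : Fin k → Finset (Fin n), Monotone σ ∧
    ∀ i : Fin k, M.Nmin ((i : ℕ) + 1) (σ i) ∧ (σ i).card = M.dW ((i : ℕ) + 1)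

/-- The CEZ greedy weights of a matroid: `g_1 = d_1` and for `i ≥ 2`,
`g_i = min {|σ| : σ ∈ 𝒩_i, ∃ τ ∈ 𝒩_{i-1}, τ ⊆ σ, |τ| = d_{i-1}}`. -/
noncomputable def gW {n : ℕ} (M : MatroidRk n) (i : ℕ) : ℕ :=
  if i ≤ 1 then M.dW 1
  else sInf {c | ∃ X, M.nul X = i ∧
    (∃ Y, M.nul Y = i - 1 ∧ Y ⊆ X ∧ Y.card = M.dW (i - 1)) ∧ X.card = c}

end MatroidRk

namespace MatroidRk

/-- `X ∈ N̄_i`: inclusion-minimal among subsets of dual nullity `i`. -/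
def NminDual {n : ℕ} (M : MatroidRk n) (i : ℕ) (X : Finset (Fin n)) : Prop :=
  M.nulDual X = i ∧ ∀ Y ⊆ X, M.nulDual Y = i → Y = X

/-- The generalized Hamming weights of the dual matroid. -/
noncomputable def dWDual {n : ℕ} (M : MatroidRk n) (i : ℕ) : ℕ :=
  sInf {c | ∃ X, M.nulDual X = i ∧ X.card = c}

/-- The dual matroid is chained (it has rank `k`, hence `n - k` weights). -/
def ChainedDual {n : ℕ} (M : MatroidRk n) (l : ℕ) : Prop :=
  ∃ σ : Fin l → Finset (Fin n), Monotone σ ∧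
    ∀ j : Fin l, M.NminDual ((j : ℕ) + 1) (σ j) ∧ (σ j).card = M.dWDual ((j : ℕ) + 1)

end MatroidRk

namespace MatroidRk

/-- Chainedness of an abstract nullity function. -/
def ChF {n : ℕ} (f : Finset (Fin n) → ℕ) (k : ℕ) : Prop :=
  ∃ σ : Fin k → Finset (Fin n), Monotone σ ∧
    ∀ i : Fin k, (f (σ i) = (i : ℕ) + 1 ∧ ∀ Y ⊆ σ i, f Y = (i : ℕ) + 1 → Y = σ i) ∧
      (σ i).card = sInf {c | ∃ X, f X = (i : ℕ) + 1 ∧ X.card = c}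

/-- A full flag of sets, each of maximal nullity for its size. -/
def FlF {n : ℕ} (f : Finset (Fin n) → ℕ) : Prop :=
  ∃ A : ℕ → Finset (Fin n), Monotone A ∧
    ∀ j ≤ n, (A j).card = j ∧ ∀ X, X.card = j → f X ≤ f (A j)

lemma flag_of_chain {n k : ℕ} (f : Finset (Fin n) → ℕ) (hm : Monotone f)
    (hu : f univ = k) (h : ChF f k) : FlF f := by
  classical
  obtain ⟨σ, hσ, h⟩ := h
  let w : Fin n → ℕ := fun a => (univ.filter (fun i => a ∉ σ i)).card
  have hw : ∀ a b i, a ∈ σ i → w b ≤ w a → b ∈ σ i := by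
    intro a b i ha hba
    by_contra hb
    refine absurd hba (not_le.2 (Finset.card_lt_card ?_))
    rw [Finset.ssubset_iff_of_subset]
    · exact ⟨i, by simpa using hb, by simpa using ha⟩
    · intro j hj
      simp only [mem_filter, mem_univ, true_and] at hj ⊢
      intro hbj
      rcases le_total i j with hij | hij
      · exact hj (hσ hij ha)
      · exact hb (hσ hij hbj)
  let p := Tuple.sort w
  have hp : Monotone (w ∘ p) := Tuple.monotone_sort w
  let A : ℕ → Finset (Fin n) := fun j => (univ.filter (fun i : Fin n => (i : ℕ) < j)).image p
  have hcard : ∀ j ≤ n, (A j).card = j := by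
    intro j hj
    simp only [A]
    rw [Finset.card_image_of_injective _ p.injective, Fin.card_filter_val_lt]
    omega
  have hAm : Monotone A := by
    intro i j hij
    apply Finset.image_subset_image
    intro x
    simp only [mem_filter, mem_univ, true_and]
    omega
  refine ⟨A, hAm, ?_⟩
  intro j hj
  refine ⟨hcard j hj, ?_⟩
  intro X hX
  rcases Nat.eq_zero_or_pos (f X) with h0 | hpos
  · omega
  have hk : f X ≤ k := hu ▸ hm (Finset.subset_univ X)
  let i : Fin k := ⟨f X - 1, by omega⟩
  have hi : (i : ℕ) + 1 = f X := by simp only [i]; omega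
  have hle : (σ i).card ≤ j := by
    rw [(h i).2]
    exact Nat.sInf_le ⟨X, hi.symm, hX⟩
  have hsub : σ i ⊆ A j := by
    by_contra hns
    obtain ⟨a, ha, hna⟩ := Finset.not_subset.1 hns
    have hAs : A j ⊆ σ i := by
      intro b hb
      simp only [A, mem_image, mem_filter, mem_univ, true_and, not_exists, not_and] at hb hna
      obtain ⟨y, hy, rfl⟩ := hb
      have hx : ¬ ((p.symm a : Fin n) : ℕ) < j := fun hx => hna _ hx (by simp)
      refine hw a _ i ha ?_
      have := @hp y (p.symm a) (Fin.le_def.2 (by omega))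
      simpa using this
    have heq := Finset.eq_of_subset_of_card_le hAs (by rw [hcard j hj]; exact hle)
    exact hna (heq ▸ ha)
  calc f X = f (σ i) := by rw [(h i).1.1, hi]
    _ ≤ f (A j) := hm hsub

lemma exists_sub {n : ℕ} (f : Finset (Fin n) → ℕ) (h0 : f ∅ = 0)
    (h1 : ∀ a X, f (insert a X) ≤ f X + 1) (i : ℕ) (X : Finset (Fin n)) :
    i ≤ f X → ∃ Y ⊆ X, f Y = i := by
  induction X using Finset.induction_on with
  | empty => intro h; exact ⟨∅, subset_rfl, by omega⟩
  | insert a X _ ih =>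
    intro h
    by_cases hX : i ≤ f X
    · obtain ⟨Y, hY, e⟩ := ih hX
      exact ⟨Y, hY.trans (Finset.subset_insert _ _), e⟩
    · exact ⟨_, subset_rfl, by have := h1 a X; omega⟩

lemma chain_of_flag {n k : ℕ} (f : Finset (Fin n) → ℕ) (hm : Monotone f) (h0 : f ∅ = 0)
    (h1 : ∀ a X, f (insert a X) ≤ f X + 1)
    (hu : f univ = k) (h : FlF f) : ChF f k := by
  classical
  obtain ⟨A, hA, h⟩ := h
  let d : ℕ → ℕ := fun i => sInf {c | ∃ X, f X = i ∧ X.card = c}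
  have hd : ∀ i ≤ k, ∃ X, f X = i ∧ X.card = d i := by
    intro i hi
    obtain ⟨Y, _, hY⟩ := exists_sub f h0 h1 i univ (by omega)
    exact Nat.sInf_mem (s := {c | ∃ X, f X = i ∧ X.card = c}) ⟨_, Y, hY, rfl⟩
  have hle : ∀ i X, i ≤ f X → d i ≤ X.card := by
    intro i X hX
    obtain ⟨Y, hs, hY⟩ := exists_sub f h0 h1 i X hX
    exact (Nat.sInf_le ⟨Y, hY, rfl⟩ : d i ≤ Y.card).trans (Finset.card_le_card hs)
  have hdn : ∀ i ≤ k, d i ≤ n := by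
    intro i hi
    have := hle i univ (by omega)
    simpa using this
  have hf : ∀ i ≤ k, f (A (d i)) = i := by
    intro i hi
    obtain ⟨X, hX, hc⟩ := hd i hi
    obtain ⟨hAc, hmax⟩ := h (d i) (hdn i hi)
    have hge := hmax X hc
    by_contra hne
    have hgt : i + 1 ≤ f (A (d i)) := by omega
    have hnon : (A (d i)).Nonempty := by
      rw [Finset.nonempty_iff_ne_empty]
      intro he
      rw [he] at hgt
      omega
    obtain ⟨a, ha⟩ := hnon
    have e := h1 a ((A (d i)).erase a)
    rw [Finset.insert_erase ha] at e
    have := hle i ((A (d i)).erase a) (by omega)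
    have := Finset.card_erase_lt_of_mem ha
    omega
  refine ⟨fun i => A (d (i + 1)), ?_, ?_⟩
  · intro i j hij
    apply hA
    obtain ⟨X, hX, hc⟩ := hd (j + 1) (by omega)
    rw [← hc]
    apply hle
    have : (i : ℕ) ≤ j := hij
    omega
  · intro i
    have hik : (i : ℕ) + 1 ≤ k := by omega
    have hc := (h _ (hdn _ hik)).1
    refine ⟨⟨hf _ hik, ?_⟩, hc⟩
    intro Y hY e
    apply Finset.eq_of_subset_of_card_le hY
    rw [hc]
    exact hle _ _ e.ge

lemma flag_compl {n : ℕ} (f g : Finset (Fin n) → ℕ)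
    (hfg : ∀ X, g X + (n - X.card) = f Xᶜ + g univ) (h : FlF f) : FlF g := by
  classical
  obtain ⟨A, hA, h⟩ := h
  refine ⟨fun j => (A (n - j))ᶜ, ?_, ?_⟩
  · intro i j hij
    exact Finset.compl_subset_compl.2 (hA (by omega))
  · intro j hj
    obtain ⟨hc, hmax⟩ := h (n - j) (by omega)
    have hcc : ((A (n - j))ᶜ).card = j := by
      rw [Finset.card_compl, Fintype.card_fin]; omega
    refine ⟨hcc, ?_⟩
    intro X hX
    have e1 := hfg X
    have e2 := hfg (A (n - j))ᶜ
    have e3 := hmax Xᶜ (by rw [Finset.card_compl, Fintype.card_fin]; omega)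
    rw [compl_compl] at e2
    rw [hcc] at e2
    rw [hX] at e1
    show g X ≤ g (A (n - j))ᶜ
    omega

lemma r_union_le {n : ℕ} (M : MatroidRk n) (X Y : Finset (Fin n)) :
    M.r (X ∪ Y) ≤ X.card + M.r Y := by
  have := M.r_submod X Y
  have := M.r_le_card X
  omega

lemma r_insert_le {n : ℕ} (M : MatroidRk n) (a : Fin n) (X : Finset (Fin n)) :
    M.r (insert a X) ≤ M.r X + 1 := by
  have := M.r_union_le {a} X
  rw [← Finset.insert_eq, Finset.card_singleton] at this
  omega

lemma nulDual_eq {n : ℕ} (M : MatroidRk n) (X : Finset (Fin n)) :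
    M.nulDual X + M.r Xᶜ = M.r univ := by
  have h := M.r_union_le X Xᶜ
  rw [Finset.union_compl] at h
  have := M.r_mono (Finset.subset_univ Xᶜ)
  unfold nulDual rDual
  omega

lemma nul_eq {n : ℕ} (M : MatroidRk n) (X : Finset (Fin n)) :
    M.nul X + M.r X = X.card := by
  have := M.r_le_card X
  unfold nul
  omega

lemma nul_mono_s17 {n : ℕ} (M : MatroidRk n) : Monotone M.nul := by
  intro X Y h
  have h1 := M.nul_eq X
  have h2 := M.nul_eq Y
  have h3 := M.r_union_le (Y \ X) X
  rw [Finset.sdiff_union_of_subset h] at h3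
  have h4 := Finset.card_sdiff_add_card_eq_card h
  omega

lemma nulDual_mono {n : ℕ} (M : MatroidRk n) : Monotone M.nulDual := by
  intro X Y h
  have h1 := M.nulDual_eq X
  have h2 := M.nulDual_eq Y
  have := M.r_mono (Finset.compl_subset_compl.2 h)
  omega

lemma nul_insert {n : ℕ} (M : MatroidRk n) (a : Fin n) (X : Finset (Fin n)) :
    M.nul (insert a X) ≤ M.nul X + 1 := by
  have h1 := M.nul_eq X
  have h2 := M.nul_eq (insert a X)
  have := Finset.card_insert_le a X
  have := M.r_mono (Finset.subset_insert a X)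
  omega

lemma nulDual_insert {n : ℕ} (M : MatroidRk n) (a : Fin n) (X : Finset (Fin n)) :
    M.nulDual (insert a X) ≤ M.nulDual X + 1 := by
  have h1 := M.nulDual_eq X
  have h2 := M.nulDual_eq (insert a X)
  have h3 := M.r_insert_le a (insert a X)ᶜ
  have h4 : M.r Xᶜ ≤ M.r (insert a (insert a X)ᶜ) := by
    apply M.r_mono
    intro b
    simp only [mem_compl, mem_insert]
    tauto
  omega

end MatroidRk

open MatroidRk in
/-- a matroid is chained if and only if its dual matroid is chained. -/
theorem statement17 {n k : ℕ} (M : MatroidRk n) (hrk : M.r Finset.univ + k = n) :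
    M.Chained k ↔ M.ChainedDual (n - k) := by
  have hr0 : M.r ∅ = 0 := by have := M.r_le_card ∅; simpa using this
  have hu : M.nul univ = k := by
    have := M.nul_eq univ
    rw [Finset.card_univ, Fintype.card_fin] at this
    omega
  have hn0 : M.nul ∅ = 0 := by
    have := M.nul_eq ∅
    rw [Finset.card_empty] at this
    omega
  have hud : M.nulDual univ = n - k := by
    have := M.nulDual_eq univ
    rw [Finset.compl_univ] at this
    omega
  have hn0d : M.nulDual ∅ = 0 := by
    have := M.nulDual_eq ∅
    rw [Finset.compl_empty] at this
    omega
  have hcard : ∀ X : Finset (Fin n), X.card ≤ n := fun X => by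
    simpa using Finset.card_le_univ X
  have hcc : ∀ X : Finset (Fin n), Xᶜ.card = n - X.card := fun X => by
    rw [Finset.card_compl, Fintype.card_fin]
  constructor
  · intro h
    have hF : FlF M.nul := flag_of_chain M.nul M.nul_mono_s17 hu h
    have hG : FlF M.nulDual := by
      refine flag_compl M.nul M.nulDual ?_ hF
      intro X
      have h1 := M.nulDual_eq X
      have h2 := M.nul_eq Xᶜ
      rw [hcc] at h2
      omega
    exact chain_of_flag M.nulDual M.nulDual_mono hn0d M.nulDual_insert hud hG
  · intro h
    have hG : FlF M.nulDual := flag_of_chain M.nulDual M.nulDual_mono hud h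
    have hF : FlF M.nul := by
      refine flag_compl M.nulDual M.nul ?_ hG
      intro X
      have h1 := M.nulDual_eq Xᶜ
      have h2 := M.nul_eq X
      have h3 := hcard X
      rw [compl_compl] at h1
      omega
    exact chain_of_flag M.nul M.nul_mono_s17 hn0 M.nul_insert hu hF
end
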